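/- arXiv:2407.12713 — 2 statements merged into one kernel-verified Lean document; each statement's English description precedes it below -/
import Mathlib

section
/- Let G be a finite group and η a finite-dimensional complex representation of G with character χ^η and dimension d_η. Let K be the tensor product Markov chain on Irr(G) associated to η. Then for every integer r ≥ 1 and every ρ ∈ Irr(G), the r-step transition probability from the trivial representation 𝟙 satisfies K^r(𝟙, ρ) = d_ρ · m_ρ(η^{⊗r}) / d_η^r, where m_ρ(η^{⊗r}) denotes the multiplicity of ρ in the r-fold tensor power η^{⊗r} (equivalently, m_ρ(η^{⊗r}) = (1/|G|)·Σ_{g∈G} χ^η(g)^r · conj(χ^ρ(g)) ). -/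
open CategoryTheory MonoidalCategory Finset

noncomputable section

/-- The multiplicity of the irreducible representation `ρ` in a finite-dimensional
representation `W`: the dimension of the space of `G`-equivariant maps `ρ ⟶ W`
(by Schur's lemma this equals the multiplicity of `ρ` in a decomposition of `W`
into irreducibles). -/
def multIn {G : Type} [Monoid G] (ρ W : FDRep ℂ G) : ℕ :=
  Module.finrank ℂ (ρ ⟶ W)

/-- The transition matrix of the tensor product Markov chain on (an index set `ι` for)
the irreducible representations of `G` associated with a fixed representation `η`:
`K(λ,ρ) = m_ρ(λ⊗η)·d_ρ/(d_λ·d_η)`. -/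
def tensorChain {G : Type} [Monoid G] {ι : Type} (rep : ι → FDRep ℂ G) (η : FDRep ℂ G) :
    Matrix ι ι ℝ := fun l r =>
  (multIn (rep r) (MonoidalCategory.tensorObj (rep l) η) * Module.finrank ℂ (rep r) : ℝ) /
    (Module.finrank ℂ (rep l) * Module.finrank ℂ η)

/-- The Plancherel measure `π(ρ) = d_ρ²/|G|` on the irreducible representations of `G`. -/
def plancherel {G : Type} [Monoid G] [Fintype G] {ι : Type} (rep : ι → FDRep ℂ G) (i : ι) :
    ℝ :=
  (Module.finrank ℂ (rep i) : ℝ) ^ 2 / (Fintype.card G : ℝ)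

/-- The total variation distance between two probability distributions on a finite set:
`‖P − Q‖_TV = (1/2)·Σ_x |P x − Q x|`. -/
def tvDist {X : Type*} [Fintype X] (P Q : X → ℝ) : ℝ :=
  (1 / 2) * ∑ x, |P x - Q x|


/-- The `r`-fold tensor power `η^{⊗r}` of a representation. -/
def tensorPow {G : Type} [Monoid G] (η : FDRep ℂ G) : ℕ → FDRep ℂ G
  | 0 => 𝟙_ (FDRep ℂ G)
  | n + 1 => MonoidalCategory.tensorObj (tensorPow η n) η

/-!
Tensoring with `ξ` is additive and every representation is a biproduct of irreducibles, so
`m_ρ(λ ⊗ η ⊗ ξ) = ∑ μ, m_μ(λ ⊗ η) · m_ρ(μ ⊗ ξ)`. In the product of the chains of `η` and `ξ` the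
dimension of the intermediate state `μ` cancels, and what remains is this sum: hence
`K_η * K_ξ = K_{η ⊗ ξ}` and `K_η ^ r = K_{η^⊗r}`. The row of the trivial representation is then
read off from `𝟙 ⊗ η^⊗r ≅ η^⊗r`.

Semisimplicity is encoded as injectivity of every object, which for a finite group is Maschke's
theorem: a proper nonzero subobject splits off, and both summands have a smaller endomorphism
algebra than the whole.
-/

open Limits Module

section Semisimple

variable {C : Type*} [Category C]

/-- A family of objects listing every simple object exactly once up to isomorphism; for
`FDRep ℂ G` it plays the role of `Irr(G)`. -/
structure IsCompleteSimpleFamily [HasZeroMorphisms C] {ι : Type*} (S : ι → C) : Prop where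
  simple (i : ι) : Simple (S i)
  exists_iso (X : C) : Simple X → ∃ i, Nonempty (X ≅ S i)
  eq_of_iso (i j : ι) : Nonempty (S i ≅ S j) → i = j

theorem nonempty_iso_biprod_cokernel [Preadditive C] [HasBinaryBiproducts C] {X Y : C}
    (f : X ⟶ Y) [Mono f] [Injective X] [HasCokernel f] : Nonempty (Y ≅ X ⊞ cokernel f) := by
  have hsplit : IsSplitMono f :=
    ⟨⟨⟨Injective.factorThru (𝟙 X) f, Injective.comp_factorThru (𝟙 X) f⟩⟩⟩
  exact ⟨biprod.uniqueUpToIso _ _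
    (isBilimitBinaryBiconeOfIsSplitMonoOfCokernel (cokernelIsCokernel f))⟩

theorem simple_or_exists_iso_biprod [Abelian C] [∀ X : C, Injective X] {X : C}
    (hX : ¬ IsZero X) :
    Simple X ∨ ∃ Y Z : C, ¬ IsZero Y ∧ ¬ IsZero Z ∧ Nonempty (X ≅ Y ⊞ Z) := by
  by_contra! ⟨hsimple, hindec⟩
  refine hsimple ⟨fun {Y} f hf => ⟨fun hiso hzero => ?_, fun hne => ?_⟩⟩
  · rw [hzero, isIsoZero_iff_source_target_isZero] at hiso
    exact hX hiso.2
  · have hcoker : IsZero (cokernel f) := by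
      by_contra hcoker
      exact not_isEmpty_iff.mpr (nonempty_iso_biprod_cokernel f)
        (hindec Y (cokernel f) (fun hY => hne (hY.eq_zero_of_src f)) hcoker)
    have := Preadditive.epi_of_isZero_cokernel f hcoker
    exact isIso_of_mono_of_epi f

section FinrankHom

variable (k : Type*) [Field k] [Preadditive C] [Linear k C]

theorem finrank_hom_congr {W X Y Z : C} (e : W ≅ X) (e' : Y ≅ Z) :
    finrank k (W ⟶ Y) = finrank k (X ⟶ Z) :=
  (Linear.homCongr k e e').finrank_eq

variable [∀ X Y : C, FiniteDimensional k (X ⟶ Y)]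

theorem finrank_end_pos {X : C} (hX : ¬ IsZero X) : 0 < finrank k (X ⟶ X) :=
  finrank_pos_iff_exists_ne_zero.mpr ⟨𝟙 X, mt (IsZero.iff_id_eq_zero X).mpr hX⟩

theorem IsCompleteSimpleFamily.finrank_hom_eq_ite [IsAlgClosed k] [HasKernels C] {ι : Type*}
    [DecidableEq ι] {S : ι → C} (hS : IsCompleteSimpleFamily S) (i j : ι) :
    finrank k (S i ⟶ S j) = if i = j then 1 else 0 := by
  classical
  have := hS.simple i
  have := hS.simple j
  rw [finrank_hom_simple_simple k]
  refine if_congr ⟨hS.eq_of_iso i j, ?_⟩ rfl rfl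
  rintro rfl
  exact ⟨Iso.refl _⟩

variable [HasBinaryBiproducts C]

theorem finrank_hom_biprod (W X Y : C) :
    finrank k (W ⟶ X ⊞ Y) = finrank k (W ⟶ X) + finrank k (W ⟶ Y) := by
  rw [← finrank_prod]
  exact LinearEquiv.finrank_eq
    { toFun := fun f => (f ≫ biprod.fst, f ≫ biprod.snd)
      invFun := fun p => biprod.lift p.1 p.2
      map_add' := by simp
      map_smul' := by simp
      left_inv := fun f => by ext <;> simp
      right_inv := fun p => by simp }

theorem finrank_biprod_hom (X Y W : C) :
    finrank k (X ⊞ Y ⟶ W) = finrank k (X ⟶ W) + finrank k (Y ⟶ W) := by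
  rw [← finrank_prod]
  exact LinearEquiv.finrank_eq
    { toFun := fun f => (biprod.inl ≫ f, biprod.inr ≫ f)
      invFun := fun p => biprod.desc p.1 p.2
      map_add' := by simp
      map_smul' := by simp
      left_inv := fun f => by ext <;> simp
      right_inv := fun p => by simp }

theorem finrank_end_add_finrank_end_le (X Y : C) :
    finrank k (X ⟶ X) + finrank k (Y ⟶ Y) ≤ finrank k (X ⊞ Y ⟶ X ⊞ Y) := by
  simp only [finrank_hom_biprod, finrank_biprod_hom]
  omega

end FinrankHom

variable (k : Type*) [Field k] [Abelian C] [Linear k C]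
  [∀ X Y : C, FiniteDimensional k (X ⟶ Y)] [∀ X : C, Injective X]

include k in
@[elab_as_elim]
theorem induction_on_biprod {P : C → Prop} (iso : ∀ {X Y : C}, (X ≅ Y) → P X → P Y)
    (zero : ∀ X, IsZero X → P X) (simple : ∀ X, Simple X → P X)
    (biprod : ∀ X Y, P X → P Y → P (X ⊞ Y)) (X : C) : P X := by
  induction hn : finrank k (X ⟶ X) using Nat.strong_induction_on generalizing X with
  | _ n ih =>
  by_cases hX : IsZero X
  · exact zero X hX
  obtain hsimple | ⟨Y, Z, hY, hZ, ⟨e⟩⟩ := simple_or_exists_iso_biprod hX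
  · exact simple X hsimple
  have hend : finrank k (X ⟶ X) = finrank k (Y ⊞ Z ⟶ Y ⊞ Z) :=
    finrank_hom_congr k e e
  have hle := finrank_end_add_finrank_end_le k Y Z
  have hYpos := finrank_end_pos k hY
  have hZpos := finrank_end_pos k hZ
  exact iso e.symm (biprod Y Z (ih _ (by omega) Y rfl) (ih _ (by omega) Z rfl))

theorem IsCompleteSimpleFamily.additive_eq_sum_finrank_hom [IsAlgClosed k] {ι : Type*} [Fintype ι]
    {S : ι → C} (hS : IsCompleteSimpleFamily S) {M : Type*} [AddCancelCommMonoid M] (f : C → M)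
    (map_iso : ∀ {X Y : C}, (X ≅ Y) → f X = f Y)
    (map_biprod : ∀ X Y, f (X ⊞ Y) = f X + f Y) (X : C) :
    f X = ∑ i, finrank k (S i ⟶ X) • f (S i) := by
  classical
  refine induction_on_biprod k (fun e hX => ?_) (fun X hX => ?_) (fun X hX => ?_)
    (fun X Y hX hY => ?_) X
  · simpa only [map_iso e, finrank_hom_congr k (Iso.refl _) e] using hX
  · have hf : f X = 0 := by
      have e : X ≅ X ⊞ X := hX.iso ((biprod_isZero_iff X X).mpr ⟨hX, hX⟩)
      simpa only [map_biprod, left_eq_add] using map_iso e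
    have hhom (i : ι) : finrank k (S i ⟶ X) = 0 := by
      have : Subsingleton (S i ⟶ X) := ⟨hX.eq_of_tgt⟩
      exact finrank_zero_of_subsingleton
    simp only [hf, hhom, zero_smul, sum_const_zero]
  · obtain ⟨j, ⟨e⟩⟩ := hS.exists_iso X hX
    simp only [map_iso e, finrank_hom_congr k (Iso.refl _) e, hS.finrank_hom_eq_ite k, ite_smul,
      one_smul, zero_smul, sum_ite_eq', mem_univ, if_true]
  · simp only [map_biprod, hX, hY, finrank_hom_biprod, add_smul, sum_add_distrib]

end Semisimple

section Representation

variable {k G : Type*} [Field k] [Monoid G]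

theorem finrank_tensorUnit : finrank k (𝟙_ (FDRep k G)) = 1 :=
  finrank_self k

theorem finrank_tensorObj (V W : FDRep k G) :
    finrank k (V ⊗ W : FDRep k G) = finrank k V * finrank k W :=
  finrank_tensorProduct

theorem finrank_ne_zero_of_simple (V : FDRep k G) [Simple V] : finrank k V ≠ 0 := by
  intro hV
  have : Subsingleton V := finrank_zero_iff.mp hV
  refine id_nonzero V ?_
  ext x
  exact Subsingleton.elim (α := V) _ _

theorem nonempty_iso_tensorUnit_of_character_eq_one [CharZero k] (V : FDRep k G)
    (hV : ∀ g, V.character g = 1) : Nonempty (V ≅ 𝟙_ (FDRep k G)) := by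
  have hdim : finrank k V = 1 := by
    have h := hV 1
    rw [FDRep.char_one] at h
    exact_mod_cast h
  have hρ (g : G) : V.ρ g = LinearMap.id := by
    obtain ⟨c, hc, -⟩ := LinearMap.existsUnique_eq_smul_id_of_finrank_eq_one hdim (V.ρ g)
    have htrace := hV g
    rw [FDRep.character, hc, map_smul, LinearMap.trace_id, hdim, Nat.cast_one, smul_eq_mul,
      mul_one] at htrace
    rw [hc, htrace, one_smul]
  obtain ⟨e⟩ := nonempty_linearEquiv_of_finrank_eq_one hdim
  refine ⟨Action.mkIso (LinearEquiv.toFGModuleCatIso e.symm) fun g => ?_⟩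
  ext x
  exact congrArg e.symm (LinearMap.congr_fun (hρ g) x)

end Representation

section TensorChain

variable {G : Type} [Monoid G]

theorem multIn_congr (V : FDRep ℂ G) {W U : FDRep ℂ G} (e : W ≅ U) : multIn V W = multIn V U :=
  finrank_hom_congr ℂ (Iso.refl V) e

theorem finrank_tensorPow (η : FDRep ℂ G) (n : ℕ) :
    finrank ℂ (tensorPow η n) = finrank ℂ η ^ n := by
  induction n with
  | zero => exact finrank_tensorUnit
  | succ n ih => rw [tensorPow, finrank_tensorObj, ih, pow_succ]

theorem multIn_biprod_tensorObj (V W U η : FDRep ℂ G) :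
    multIn V ((W ⊞ U) ⊗ η) = multIn V (W ⊗ η) + multIn V (U ⊗ η) := by
  have := preservesBinaryBiproducts_of_preservesBiproducts (tensorRight η)
  exact (multIn_congr V ((tensorRight η).mapBiprod W U)).trans
    (finrank_hom_biprod ℂ V (W ⊗ η) (U ⊗ η))

variable {ι : Type} {rep : ι → FDRep ℂ G}

theorem tensorChain_tensorUnit [DecidableEq ι] (hrep : IsCompleteSimpleFamily rep) :
    tensorChain rep (𝟙_ (FDRep ℂ G)) = 1 := by
  ext i j
  have := hrep.simple i
  have hi : (finrank ℂ (rep i) : ℝ) ≠ 0 := Nat.cast_ne_zero.mpr (finrank_ne_zero_of_simple _)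
  rw [tensorChain, multIn_congr _ (ρ_ (rep i)), multIn, hrep.finrank_hom_eq_ite ℂ,
    finrank_tensorUnit, Matrix.one_apply]
  obtain rfl | hij := eq_or_ne i j
  · simp [hi]
  · simp [hij, hij.symm]

variable [Fintype ι]

theorem multIn_tensorObj [∀ V : FDRep ℂ G, Injective V] (hrep : IsCompleteSimpleFamily rep)
    (V W η : FDRep ℂ G) :
    multIn V (W ⊗ η) = ∑ i, multIn (rep i) W * multIn V (rep i ⊗ η) :=
  hrep.additive_eq_sum_finrank_hom ℂ (fun W => multIn V (W ⊗ η))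
    (fun e => multIn_congr V (whiskerRightIso e η))
    (fun W U => multIn_biprod_tensorObj V W U η) W

theorem tensorChain_mul [∀ V : FDRep ℂ G, Injective V] (hrep : IsCompleteSimpleFamily rep)
    (η ξ : FDRep ℂ G) :
    tensorChain rep η * tensorChain rep ξ = tensorChain rep (η ⊗ ξ) := by
  ext i j
  have hterm (l : ι) : tensorChain rep η i l * tensorChain rep ξ l j =
      (multIn (rep l) (rep i ⊗ η) * multIn (rep j) (rep l ⊗ ξ) : ℝ) *
        (finrank ℂ (rep j) / (finrank ℂ (rep i) * (finrank ℂ η * finrank ℂ ξ))) := by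
    have := hrep.simple l
    have hl : (finrank ℂ (rep l) : ℝ) ≠ 0 := Nat.cast_ne_zero.mpr (finrank_ne_zero_of_simple _)
    simp only [tensorChain]
    field_simp
  rw [Matrix.mul_apply, sum_congr rfl fun l _ => hterm l, ← sum_mul, tensorChain,
    ← multIn_congr (rep j) (α_ (rep i) η ξ), multIn_tensorObj hrep, finrank_tensorObj]
  push_cast
  rw [mul_div_assoc]

theorem tensorChain_pow [DecidableEq ι] [∀ V : FDRep ℂ G, Injective V]
    (hrep : IsCompleteSimpleFamily rep) (η : FDRep ℂ G) (n : ℕ) :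
    tensorChain rep η ^ n = tensorChain rep (tensorPow η n) := by
  induction n with
  | zero => rw [pow_zero, tensorPow, tensorChain_tensorUnit hrep]
  | succ n ih => rw [pow_succ, ih, tensorChain_mul hrep, tensorPow]

end TensorChain

theorem rstep_transition_eq_general {G : Type} [Monoid G] [∀ V : FDRep ℂ G, Injective V]
    {ι : Type} [Fintype ι] [DecidableEq ι] {rep : ι → FDRep ℂ G}
    (hrep : IsCompleteSimpleFamily rep) (triv : ι) (htriv : ∀ g : G, (rep triv).character g = 1)
    (η : FDRep ℂ G) (r : ℕ) (ρ : ι) :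
    (tensorChain rep η ^ r) triv ρ =
      (finrank ℂ (rep ρ) * multIn (rep ρ) (tensorPow η r) : ℝ) / (finrank ℂ η : ℝ) ^ r := by
  obtain ⟨e⟩ := nonempty_iso_tensorUnit_of_character_eq_one (rep triv) htriv
  have hdim : finrank ℂ (rep triv) = 1 :=
    (FDRep.isoToLinearEquiv e).finrank_eq.trans finrank_tensorUnit
  have hmult : multIn (rep ρ) (rep triv ⊗ tensorPow η r) = multIn (rep ρ) (tensorPow η r) :=
    multIn_congr _ (whiskerRightIso e _ ≪≫ λ_ _)
  rw [tensorChain_pow hrep, tensorChain, hmult, hdim, finrank_tensorPow, Nat.cast_one, one_mul,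
    Nat.cast_pow, mul_comm]

/-- **Lemma (r-step transition probabilities).**  Let `G` be a finite group, `rep` a complete
list of pairwise non-isomorphic irreducible complex representations of `G` (indexed by `ι`),
`triv` the index of the trivial representation, and `η` a finite-dimensional complex
representation of `G`.  For the tensor product Markov chain `K` associated with `η`, for
every `r ≥ 1` and every irreducible `ρ`, `K^r(𝟙, ρ) = d_ρ · m_ρ(η^{⊗r}) / d_η^r`. -/
theorem rstep_transition_eq {G : Type} [Group G] [Fintype G]
    {ι : Type} [Fintype ι] [DecidableEq ι]
    (rep : ι → FDRep ℂ G)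
    (hsimple : ∀ i, Simple (rep i))
    (hcomplete : ∀ V : FDRep ℂ G, Simple V → ∃ i, Nonempty (V ≅ rep i))
    (hinj : ∀ i j : ι, Nonempty (rep i ≅ rep j) → i = j)
    (triv : ι) (htriv : ∀ g : G, (rep triv).character g = 1)
    (η : FDRep ℂ G)
    (r : ℕ) (hr : 1 ≤ r) (ρ : ι) :
    (tensorChain rep η ^ r) triv ρ =
      (Module.finrank ℂ (rep ρ) * multIn (rep ρ) (tensorPow η r) : ℝ) /
        (Module.finrank ℂ η : ℝ) ^ r :=
  rstep_transition_eq_general ⟨hsimple, hcomplete, hinj⟩ triv htriv η r ρ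
end
end

section
/- Let F be a finite field with q elements, let n ≥ 3, and let η be a complex representation of G = GL_n(F) whose character satisfies χ^η(g) = q^{dim ker(g−1)} for all g ∈ G (the Weil representation of GL_n(q)). Let K be the tensor product Markov chain on Irr(G) associated to η, started at the trivial representation 𝟙, and let π be the Plancherel measure. Then for every integer c with 1 ≤ c ≤ n−1 and r = n−c, one has ‖K^r_𝟙 − π‖_TV ≥ 1 − 11.25·q^{2−2c} − 18·q^{1−c}. In particular, for every ε > 0 there exists c > 0 depending only on ε such that ‖K^r_𝟙 − π‖_TV ≥ 1 − ε for r = n−c and all sufficiently large n. -/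
open CategoryTheory MonoidalCategory Finset

noncomputable section

/-- The dimension of the fixed space `ker(g−1)` of `g ∈ GL_m(F)` acting on `F^m`. -/
def fixdim {F : Type} [Field F] {m : ℕ} (g : (Matrix (Fin m) (Fin m) F)ˣ) : ℕ :=
  Module.finrank F (LinearMap.ker (Matrix.toLin' ((g : Matrix (Fin m) (Fin m) F) - 1)))

/-!
The character of `η` is the permutation character of `G` on `F ^ n`, so `K ^ k` can only charge
irreducible representations containing a nonzero vector fixed by the stabilizer of some `k`-tuple in
`F ^ n`, hence by the pointwise stabilizer `G_W` of some `k`-dimensional subspace `W`. The `G_W`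
are permuted by conjugation, so such an irreducible representation `ρ` is the sum of its fixed
spaces `ρ ^ G_W`. Thus its Plancherel mass is at most `∑ W, d_ρ * dim ρ ^ G_W / |G|`, and summing
over all `ρ` gives at most `∑ W, 1 / |G_W|`, because `∑ ρ, d_ρ * dim ρ ^ H = |G| / |H|` is the
dimension of the `H`-fixed vectors of the regular representation. Counting subspaces, for
`k = n - c` this is at most `16 / q ^ (c ^ 2)`: almost all of the Plancherel mass lies off the
support of `K ^ (n - c)`.
-/

universe u

section Semisimplicity

open Representation

theorem isCompl_toSubmodule {k G V : Type*} [Field k] [Monoid G] [AddCommGroup V] [Module k V]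
    {ρ : Representation k G V} {p q : Subrepresentation ρ} (h : IsCompl p q) :
    IsCompl p.toSubmodule q.toSubmodule :=
  ⟨disjoint_iff.2 (congrArg Subrepresentation.toSubmodule h.inf_eq_bot),
    codisjoint_iff.2 (congrArg Subrepresentation.toSubmodule h.sup_eq_top)⟩

theorem nontrivial_subrepresentation {k G V : Type*} [Field k] [Monoid G] [AddCommGroup V]
    [Module k V] [Nontrivial V] (ρ : Representation k G V) : Nontrivial (Subrepresentation ρ) :=
  ⟨⊥, ⊤, fun h => bot_ne_top (α := Submodule k V) (congrArg Subrepresentation.toSubmodule h)⟩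

theorem exists_isCompl_ne_top {α : Type*} [Lattice α] [BoundedOrder α] [ComplementedLattice α]
    [Nontrivial α] (h : ¬ IsSimpleOrder α) : ∃ a b : α, IsCompl a b ∧ a ≠ ⊤ ∧ b ≠ ⊤ := by
  obtain ⟨a, hbot, htop⟩ : ∃ a : α, a ≠ ⊥ ∧ a ≠ ⊤ := by
    by_contra! ha
    exact h { eq_bot_or_eq_top := fun a => or_iff_not_imp_left.2 (ha a) }
  obtain ⟨b, hab⟩ := exists_isCompl a
  exact ⟨a, b, hab, htop, fun hb => hbot (eq_bot_of_isCompl_top (hb ▸ hab))⟩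

theorem character_eq_add_of_isCompl {k G V : Type*} [Field k] [Monoid G] [AddCommGroup V]
    [Module k V] [FiniteDimensional k V] {ρ : Representation k G V} {p q : Subrepresentation ρ}
    (h : IsCompl p q) :
    ρ.character = p.toRepresentation.character + q.toRepresentation.character := by
  ext g
  have hpq := isCompl_toSubmodule h
  rw [Pi.add_apply, character, character, character, ← LinearMap.trace_prodMap',
    ← LinearMap.trace_conj' _ (Submodule.prodEquivOfIsCompl _ _ hpq)]
  congr 1
  ext v
  obtain ⟨w, rfl⟩ := (Submodule.prodEquivOfIsCompl _ _ hpq).surjective v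
  simp [LinearEquiv.conj_apply, Subrepresentation.toRepresentation]

variable {k G : Type u} [Field k]

theorem nontrivial_of_simple [Monoid G] (V : FDRep k G) [Simple V] : Nontrivial V := by
  by_contra h
  rw [not_nontrivial_iff_subsingleton] at h
  refine id_nonzero V ?_
  ext v
  exact Subsingleton.elim (α := V) _ _

theorem isIrreducible_of_simple [Monoid G] (V : FDRep k G) [Simple V] : IsIrreducible V.ρ := by
  have := nontrivial_of_simple V
  have := nontrivial_subrepresentation V.ρ
  refine { eq_bot_or_eq_top := fun p => or_iff_not_imp_left.2 fun hp => ?_ }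
  let f : FDRep.of p.toRepresentation ⟶ V :=
    ⟨FGModuleCat.ofHom p.toSubmodule.subtype, fun g => rfl⟩
  have hmono : Mono f := ConcreteCategory.mono_of_injective f p.toSubmodule.injective_subtype
  have hf : f ≠ 0 := by
    rintro h
    refine hp (Subrepresentation.toSubmodule_injective (eq_bot_iff.2 fun v hv => ?_))
    exact congrArg (fun f : FDRep.of p.toRepresentation ⟶ V => f.hom.hom.hom ⟨v, hv⟩) h
  have := isIso_of_mono_of_nonzero hf
  refine Subrepresentation.toSubmodule_injective (eq_top_iff.2 fun v _ => ?_)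
  obtain ⟨w, rfl⟩ := (FDRep.isoToLinearEquiv (asIso f)).surjective v
  exact w.2

theorem simple_of_isIrreducible [Group G] [Finite G] [IsAlgClosed k] [NeZero (Nat.card G : k)]
    (V : FDRep k G) [IsIrreducible V.ρ] : Simple V := by
  rw [FDRep.simple_iff_end_is_rank_one,
    ← (linHom.invariantsEquivFDRepHom V V).finrank_eq,
    (invariantsEquivIntertwiningMap V.ρ V.ρ).finrank_eq,
    IsIrreducible.finrank_intertwiningMap_self]

end Semisimplicity

/-- `rep` lists every isomorphism class of irreducible representations of `G` exactly once, so that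
its index type stands for `Irr(G)`. -/
structure IsIrrepSystem {G : Type} [Monoid G] {ι : Type} (rep : ι → FDRep ℂ G) : Prop where
  simple : ∀ i, Simple (rep i)
  exists_iso : ∀ V : FDRep ℂ G, Simple V → ∃ i, Nonempty (V ≅ rep i)
  eq_of_iso : ∀ i j, Nonempty (rep i ≅ rep j) → i = j

section CharacterTheory

variable {G : Type} [Group G]

/-- The pairing `φ ↦ |G|⁻¹ ∑ g, φ g * ψ g⁻¹` of functions on `G`, bundled as a linear map in `φ`.
It is the usual inner product `⟨φ, ψ⟩` when `ψ` is a character, as then `ψ g⁻¹` is the conjugate of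
`ψ g`. -/
def charPairing [Fintype G] (ψ : G → ℂ) : (G → ℂ) →ₗ[ℂ] ℂ :=
  (Nat.card G : ℂ)⁻¹ • ∑ g, ψ g⁻¹ • LinearMap.proj g

theorem charPairing_apply [Fintype G] (ψ φ : G → ℂ) :
    charPairing ψ φ = (Nat.card G : ℂ)⁻¹ * ∑ g, φ g * ψ g⁻¹ := by
  simp [charPairing, mul_comm]

theorem charPairing_character [Fintype G] (V W : FDRep ℂ G) :
    charPairing V.character W.character = multIn V W := by
  have := invertibleOfNonzero (NeZero.ne (Nat.card G : ℂ))
  rw [charPairing_apply, FDRep.scalar_product_char_eq_finrank_equivariant, multIn]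

namespace IsIrrepSystem

variable {ι : Type} {rep : ι → FDRep ℂ G}

theorem multIn_rep [DecidableEq ι] (h : IsIrrepSystem rep) (i j : ι) :
    multIn (rep i) (rep j) = if i = j then 1 else 0 := by
  have := h.simple i
  have := h.simple j
  classical
  rw [multIn, FDRep.finrank_hom_simple_simple]
  exact if_congr ⟨h.eq_of_iso i j, by rintro rfl; exact ⟨Iso.refl _⟩⟩ rfl rfl

variable [Finite G] [Fintype ι]

theorem exists_character_eq_sum (h : IsIrrepSystem rep) (W : FDRep ℂ G) :
    ∃ m : ι → ℕ, W.character = ∑ i, (m i : ℂ) • (rep i).character := by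
  classical
  induction hd : Module.finrank ℂ W using Nat.strong_induction_on generalizing W with
  | _ d ih =>
  subst hd
  by_cases hirr : Representation.IsIrreducible W.ρ
  · obtain ⟨i, ⟨e⟩⟩ := h.exists_iso W (simple_of_isIrreducible W)
    exact ⟨Pi.single i 1, by simp [FDRep.char_iso e, Pi.single_apply]⟩
  rcases subsingleton_or_nontrivial W with hW | hW
  · refine ⟨0, funext fun g => ?_⟩
    simp [FDRep.character, Subsingleton.elim (W.ρ g) 0]
  have := nontrivial_subrepresentation W.ρ
  obtain ⟨p, q, hpq, hp, hq⟩ := exists_isCompl_ne_top hirr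
  have finrank_lt {p : Subrepresentation W.ρ} (hp : p ≠ ⊤) :
      Module.finrank ℂ p.toSubmodule < Module.finrank ℂ W :=
    Submodule.finrank_lt fun h => hp (Subrepresentation.toSubmodule_injective h)
  obtain ⟨m, hm⟩ := ih _ (finrank_lt hp) (FDRep.of p.toRepresentation) rfl
  obtain ⟨m', hm'⟩ := ih _ (finrank_lt hq) (FDRep.of q.toRepresentation) rfl
  refine ⟨m + m', ?_⟩
  simp only [Pi.add_apply, Nat.cast_add, add_smul, sum_add_distrib, ← hm, ← hm']
  exact character_eq_add_of_isCompl hpq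

theorem character_eq_sum_multIn (h : IsIrrepSystem rep) (W : FDRep ℂ G) :
    W.character = ∑ i, (multIn (rep i) W : ℂ) • (rep i).character := by
  classical
  have := Fintype.ofFinite G
  obtain ⟨m, hm⟩ := h.exists_character_eq_sum W
  refine hm.trans (sum_congr rfl fun i _ => ?_)
  rw [← charPairing_character, hm]
  simp [charPairing_character, h.multIn_rep]

end IsIrrepSystem

end CharacterTheory

/-- The subspace of vectors fixed by the subgroup `H`. -/
def fixedSubmodule {k G V : Type*} [CommRing k] [Group G] [AddCommGroup V] [Module k V]
    (ρ : Representation k G V) (H : Subgroup G) : Submodule k V :=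
  Representation.invariants (ρ.comp H.subtype)

section FixedVectors

open MulAction

theorem mem_fixedSubmodule {k G V : Type*} [CommRing k] [Group G] [AddCommGroup V]
    [Module k V] {ρ : Representation k G V} {H : Subgroup G} {v : V} :
    v ∈ fixedSubmodule ρ H ↔ ∀ h ∈ H, ρ h v = v := by
  simp [fixedSubmodule, Representation.mem_invariants]

theorem sum_character_subgroup {k G V : Type*} [Field k] [CharZero k] [Group G] [AddCommGroup V]
    [Module k V] [FiniteDimensional k V] (ρ : Representation k G V) (H : Subgroup G) [Fintype H] :
    ∑ h : H, ρ.character h = Nat.card H * Module.finrank k (fixedSubmodule ρ H) := by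
  have hH : (Nat.card H : k) ≠ 0 := NeZero.ne _
  have := invertibleOfNonzero hH
  rw [fixedSubmodule, ← Representation.card_inv_mul_sum_char_eq_finrank, mul_inv_cancel_left₀ hH]
  rfl

theorem cast_ncard_eq_sum_ite {R X : Type*} [AddCommMonoidWithOne R] [Fintype X] (s : Set X)
    [DecidablePred (· ∈ s)] : (s.ncard : R) = ∑ x, if x ∈ s then 1 else 0 := by
  rw [Set.ncard_eq_toFinset_card', ← natCast_card_filter]
  congr 2
  ext x
  simp

theorem character_ofMulAction {k G X : Type*} [Field k] [Monoid G] [Finite X] [MulAction G X]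
    (g : G) :
    (Representation.ofMulAction k G X).character g = (fixedBy X g).ncard := by
  classical
  have := Fintype.ofFinite X
  let b : Module.Basis X k (MonoidAlgebra k X) := .ofRepr (MonoidAlgebra.coeffLinearEquiv k)
  have hb (x : X) : b x = MonoidAlgebra.single x 1 := rfl
  rw [Representation.character, LinearMap.trace_eq_matrix_trace k b, Matrix.trace,
    cast_ncard_eq_sum_ite]
  refine sum_congr rfl fun x _ => ?_
  simp [LinearMap.toMatrix_apply, hb, Representation.ofMulAction_single, b, Finsupp.single_apply]

theorem card_mul_charPairing_ncard_fixedBy {G X : Type} [Group G] [Fintype G] [Fintype X]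
    [MulAction G X] (V : FDRep ℂ G) :
    Nat.card G * charPairing V.character (fun g => (fixedBy X g).ncard) =
      ∑ x : X, (Nat.card (stabilizer G x) *
        Module.finrank ℂ (fixedSubmodule V.ρ (stabilizer G x)) : ℂ) := by
  classical
  have hsum (x : X) := sum_character_subgroup V.ρ (stabilizer G x)
  rw [charPairing_apply, mul_inv_cancel_left₀ (NeZero.ne _), ← Equiv.sum_comp (Equiv.inv G)]
  simp only [← hsum, Equiv.inv_apply, inv_inv, fixedBy_inv]
  simp_rw [cast_ncard_eq_sum_ite, sum_mul, ite_mul, one_mul, zero_mul]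
  rw [sum_comm]
  refine sum_congr rfl fun x _ => ?_
  rw [← sum_filter]
  exact sum_subtype _ (by simp) _

end FixedVectors

section Plancherel

open Representation MulAction

theorem finrank_fixedSubmodule_bot {k G V : Type*} [CommRing k] [Group G] [AddCommGroup V]
    [Module k V] (ρ : Representation k G V) :
    Module.finrank k (fixedSubmodule ρ ⊥) = Module.finrank k V := by
  have : fixedSubmodule ρ ⊥ = ⊤ := by ext v; simp [mem_fixedSubmodule]
  rw [this, finrank_top]

theorem character_leftRegular {k G : Type u} [Field k] [Group G] [Finite G] [DecidableEq G] :
    (FDRep.of (leftRegular k G)).character = fun g => if g = 1 then (Nat.card G : k) else 0 := by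
  funext g
  refine (character_ofMulAction g).trans ?_
  split_ifs with hg
  · simp [hg, Set.ncard_univ]
  · simp [fixedBy, hg]

theorem multIn_leftRegular {G : Type} [Group G] [Finite G] (V : FDRep ℂ G) :
    multIn V (FDRep.of (leftRegular ℂ G)) = Module.finrank ℂ V := by
  classical
  have := Fintype.ofFinite G
  have h := charPairing_character V (FDRep.of (leftRegular ℂ G))
  rw [character_leftRegular, charPairing_apply] at h
  simpa [eq_comm] using h

namespace IsIrrepSystem

variable {G : Type} [Group G] {ι : Type} [Fintype ι] {rep : ι → FDRep ℂ G}

theorem card_mul_sum_finrank_mul_finrank_fixedSubmodule [Finite G] (h : IsIrrepSystem rep)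
    (H : Subgroup G) :
    Nat.card H * ∑ i, Module.finrank ℂ (rep i) * Module.finrank ℂ (fixedSubmodule (rep i).ρ H) =
      Nat.card G := by
  classical
  have := Fintype.ofFinite G
  have hreg (g : G) : ∑ i, Module.finrank ℂ (rep i) * (rep i).character g =
      if g = 1 then (Nat.card G : ℂ) else 0 := by
    rw [← congrFun character_leftRegular g, h.character_eq_sum_multIn (FDRep.of _)]
    simp [multIn_leftRegular]
  have := calc ((Nat.card H * ∑ i, Module.finrank ℂ (rep i) *
        Module.finrank ℂ (fixedSubmodule (rep i).ρ H) : ℕ) : ℂ)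
    _ = ∑ i, Module.finrank ℂ (rep i) * ∑ x : H, (rep i).character x := by
      push_cast
      rw [mul_sum]
      refine sum_congr rfl fun i _ => ?_
      rw [mul_left_comm]
      exact congrArg _ (sum_character_subgroup (rep i).ρ H).symm
    _ = ∑ x : H, if (x : G) = 1 then (Nat.card G : ℂ) else 0 := by
      simp_rw [mul_sum]
      rw [sum_comm]
      simp_rw [hreg]
    _ = Nat.card G := by simp
  exact_mod_cast this

theorem sum_plancherel [Fintype G] (h : IsIrrepSystem rep) : ∑ i, plancherel rep i = 1 := by
  have := h.card_mul_sum_finrank_mul_finrank_fixedSubmodule ⊥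
  simp only [finrank_fixedSubmodule_bot, Subgroup.card_bot, one_mul, ← sq] at this
  simp only [plancherel, ← sum_div]
  rw [← Nat.card_eq_fintype_card, div_eq_one_iff_eq (NeZero.ne _)]
  exact_mod_cast this

end IsIrrepSystem

end Plancherel

theorem sum_sub_le_tvDist {X : Type*} [Fintype X] {P Q : X → ℝ} (h : ∑ x, P x = ∑ x, Q x)
    (s : Finset X) : ∑ x ∈ s, (P x - Q x) ≤ tvDist P Q := by
  classical
  have hs : ∑ x ∈ s, (P x - Q x) ≤ ∑ x ∈ s, |P x - Q x| := sum_le_sum fun x _ => le_abs_self _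
  have hsc : -∑ x ∈ sᶜ, (P x - Q x) ≤ ∑ x ∈ sᶜ, |P x - Q x| := by
    rw [← sum_neg_distrib]
    exact sum_le_sum fun x _ => neg_le_abs _
  have hzero : ∑ x, (P x - Q x) = 0 := by rw [sum_sub_distrib, h, sub_self]
  rw [← sum_add_sum_compl s] at hzero
  rw [tvDist, ← sum_add_sum_compl s fun x => |P x - Q x|]
  linarith

section TensorChain

open MulAction

variable {G : Type} [Group G] {ι : Type} {rep : ι → FDRep ℂ G}

namespace IsIrrepSystem

theorem finrank_pos (h : IsIrrepSystem rep) (i : ι) : 0 < Module.finrank ℂ (rep i) := by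
  have := h.simple i
  have := nontrivial_of_simple (rep i)
  exact Module.finrank_pos

variable [Fintype ι] [DecidableEq ι]

theorem tensorChain_mem_rowStochastic [Finite G] (h : IsIrrepSystem rep) (η : FDRep ℂ G)
    [Nontrivial η] : tensorChain rep η ∈ Matrix.rowStochastic ℝ ι := by
  refine Matrix.mem_rowStochastic_iff_sum.2
    ⟨fun l r => by unfold tensorChain; positivity, fun l => ?_⟩
  have hdim := congrFun (h.character_eq_sum_multIn (rep l ⊗ η)) 1
  have hl := (h.finrank_pos l).ne'
  have hη : Module.finrank ℂ η ≠ 0 := Module.finrank_pos.ne'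
  rw [FDRep.char_tensor] at hdim
  simp only [Pi.mul_apply, FDRep.char_one, Finset.sum_apply, Pi.smul_apply, smul_eq_mul] at hdim
  simp only [tensorChain, ← sum_div]
  rw [div_eq_one_iff_eq (by positivity)]
  exact_mod_cast hdim.symm

theorem tensorChain_pow_apply [Fintype G] (h : IsIrrepSystem rep) (η : FDRep ℂ G) (k : ℕ)
    (l i : ι) :
    (((tensorChain rep η ^ k) l i : ℝ) : ℂ) =
      Module.finrank ℂ (rep i) / (Module.finrank ℂ (rep l) * Module.finrank ℂ η ^ k) *
        charPairing (rep i).character ((rep l).character * η.character ^ k) := by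
  have hd (j : ι) : (Module.finrank ℂ (rep j) : ℂ) ≠ 0 := by exact_mod_cast (h.finrank_pos j).ne'
  induction k generalizing l with
  | zero =>
    rcases eq_or_ne l i with rfl | hli
    · simp [charPairing_character, h.multIn_rep, hd]
    · simp [charPairing_character, h.multIn_rep, hli, hli.symm]
  | succ k ih =>
    rw [pow_succ', Matrix.mul_apply, pow_succ' η.character, ← mul_assoc, ← FDRep.char_tensor,
      h.character_eq_sum_multIn (rep l ⊗ η), sum_mul, map_sum, mul_sum]
    push_cast
    refine sum_congr rfl fun j _ => ?_
    rw [ih, smul_mul_assoc, map_smul, tensorChain]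
    push_cast
    have := hd j
    simp only [smul_eq_mul, pow_succ']
    field_simp

end IsIrrepSystem

end TensorChain

theorem finrank_iSup_le_sum_finrank {K V κ : Type*} [DivisionRing K] [AddCommGroup V] [Module K V]
    [FiniteDimensional K V] [Fintype κ] (S : κ → Submodule K V) :
    Module.finrank K ↥(⨆ w, S w) ≤ ∑ w, Module.finrank K (S w) := by
  rw [← sup_univ_eq_iSup]
  induction (univ : Finset κ) using Finset.cons_induction with
  | empty => simp
  | cons w s hw ih =>
    rw [sup_cons, sum_cons]
    exact (Submodule.finrank_add_le_finrank_add_finrank _ _).trans (Nat.add_le_add_left ih _)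

section ConjugationStableFamilies

variable {G : Type} [Group G] {κ : Type*} {H : κ → Subgroup G}

theorem apply_mem_fixedSubmodule_conj {k V : Type*} [CommRing k] [AddCommGroup V] [Module k V]
    {ρ : Representation k G V} {H : Subgroup G} {v : V} (hv : v ∈ fixedSubmodule ρ H) (g : G) :
    ρ g v ∈ fixedSubmodule ρ (H.map (MulAut.conj g).toMonoidHom) := by
  rw [mem_fixedSubmodule] at hv ⊢
  rintro _ ⟨h, hh, rfl⟩
  simp [hv h hh]

theorem iSup_fixedSubmodule_eq_top {k V : Type*} [Field k] [AddCommGroup V]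
    [Module k V] (ρ : Representation k G V) [ρ.IsIrreducible]
    (hH : ∀ w g, ∃ w', (H w).map (MulAut.conj g).toMonoidHom = H w') {w : κ}
    (hw : fixedSubmodule ρ (H w) ≠ ⊥) : ⨆ w, fixedSubmodule ρ (H w) = ⊤ := by
  let p : Subrepresentation ρ :=
    { toSubmodule := ⨆ w, fixedSubmodule ρ (H w)
      apply_mem_toSubmodule := fun g => by
        refine (iSup_le fun w v hv => ?_ : _ ≤ (⨆ w, fixedSubmodule ρ (H w)).comap (ρ g))
        obtain ⟨w', hw'⟩ := hH w g
        exact Submodule.mem_iSup_of_mem w' (hw' ▸ apply_mem_fixedSubmodule_conj hv g) }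
  have hp : p ≠ ⊥ := fun h => hw <| eq_bot_iff.2 <|
    (le_iSup (fun w => fixedSubmodule ρ (H w)) w).trans
      (congrArg Subrepresentation.toSubmodule h).le
  exact congrArg Subrepresentation.toSubmodule ((eq_bot_or_eq_top p).resolve_left hp)

variable [Fintype κ] {ι : Type} {rep : ι → FDRep ℂ G}

namespace IsIrrepSystem

theorem plancherel_le_sum [Fintype G] (h : IsIrrepSystem rep)
    (hH : ∀ w g, ∃ w', (H w).map (MulAut.conj g).toMonoidHom = H w') {i : ι} {w : κ}
    (hw : fixedSubmodule (rep i).ρ (H w) ≠ ⊥) :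
    plancherel rep i ≤ ∑ w, (Module.finrank ℂ (rep i) *
      Module.finrank ℂ (fixedSubmodule (rep i).ρ (H w)) : ℝ) / Nat.card G := by
  have := h.simple i
  have := isIrreducible_of_simple (rep i)
  have hd := finrank_iSup_le_sum_finrank fun w => fixedSubmodule (rep i).ρ (H w)
  rw [iSup_fixedSubmodule_eq_top _ hH hw, finrank_top] at hd
  rw [plancherel, sq, ← sum_div, ← mul_sum, Nat.card_eq_fintype_card]
  gcongr
  exact_mod_cast hd

variable [Fintype ι]

theorem one_sub_sum_inv_card_le_tvDist [Fintype G] (h : IsIrrepSystem rep)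
    (hH : ∀ w g, ∃ w', (H w).map (MulAut.conj g).toMonoidHom = H w') {P : ι → ℝ}
    (hsum : ∑ i, P i = 1) (hP : ∀ i, P i ≠ 0 → ∃ w, fixedSubmodule (rep i).ρ (H w) ≠ ⊥) :
    1 - ∑ w, (Nat.card (H w) : ℝ)⁻¹ ≤ tvDist P (plancherel rep) := by
  classical
  let m (i : ι) (w : κ) : ℝ := (Module.finrank ℂ (rep i) *
    Module.finrank ℂ (fixedSubmodule (rep i).ρ (H w)) : ℝ) / Nat.card G
  let s : Finset ι := univ.filter fun i => P i ≠ 0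
  have hmass : ∑ i ∈ s, plancherel rep i ≤ ∑ i, ∑ w, m i w := calc
    _ ≤ ∑ i ∈ s, ∑ w, m i w := sum_le_sum fun i hi =>
      (hP i (mem_filter.1 hi).2).elim fun _ => h.plancherel_le_sum hH
    _ ≤ ∑ i, ∑ w, m i w := sum_le_sum_of_subset_of_nonneg (subset_univ s) fun i _ _ =>
      sum_nonneg fun w _ => by positivity
  have hcount (w : κ) : ∑ i, m i w = (Nat.card (H w) : ℝ)⁻¹ := by
    rw [← sum_div, div_eq_iff (NeZero.ne _), eq_inv_mul_iff_mul_eq₀ (NeZero.ne _)]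
    exact_mod_cast h.card_mul_sum_finrank_mul_finrank_fixedSubmodule (H w)
  rw [sum_comm, sum_congr rfl fun w _ => hcount w] at hmass
  have htv := sum_sub_le_tvDist (hsum.trans h.sum_plancherel.symm) s
  rw [sum_sub_distrib, sum_filter_ne_zero, hsum] at htv
  linarith

end IsIrrepSystem

end ConjugationStableFamilies

section PermutationCharacters

open MulAction Pointwise

theorem ncard_fixedBy_pi {G Ω κ : Type*} [Group G] [MulAction G Ω] [Finite κ] (g : G) :
    (fixedBy (κ → Ω) g).ncard = (fixedBy Ω g).ncard ^ Nat.card κ := by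
  have := Fintype.ofFinite κ
  have : fixedBy (κ → Ω) g = Set.univ.pi fun _ => fixedBy Ω g := by
    ext x
    simp [funext_iff]
  rw [this, Set.ncard, Set.encard_pi_eq_prod_encard, prod_const, card_univ,
    Nat.card_eq_fintype_card]
  exact map_pow ENat.toNatHom _ _

theorem stabilizer_pi {G Ω κ : Type*} [Group G] [MulAction G Ω] (x : κ → Ω) :
    stabilizer G x = fixingSubgroup G (Set.range x) := by
  ext g
  simp [mem_fixingSubgroup_iff, funext_iff]

theorem fixedSubmodule_antitone {k G V : Type*} [CommRing k] [Group G] [AddCommGroup V]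
    [Module k V] (ρ : Representation k G V) : Antitone (fixedSubmodule ρ) := fun H H' hH v hv => by
  rw [mem_fixedSubmodule] at hv ⊢
  exact fun h hh => hv h (hH hh)

variable {G : Type} [Group G] {Ω : Type} [Finite Ω] [MulAction G Ω]

theorem exists_fixedSubmodule_stabilizer_ne_bot [Fintype G] {V : FDRep ℂ G}
    (hV : charPairing V.character (fun g => (fixedBy Ω g).ncard) ≠ 0) :
    ∃ x : Ω, fixedSubmodule V.ρ (stabilizer G x) ≠ ⊥ := by
  have := Fintype.ofFinite Ω
  contrapose! hV
  have hfinrank (x : Ω) : Module.finrank ℂ (fixedSubmodule V.ρ (stabilizer G x)) = 0 := by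
    rw [hV x, finrank_bot]
  refine (mul_eq_zero_iff_left (NeZero.ne (Nat.card G : ℂ))).1 ?_
  rw [card_mul_charPairing_ncard_fixedBy]
  simp [hfinrank]

namespace IsIrrepSystem

variable {ι : Type} [Fintype ι] [DecidableEq ι] {rep : ι → FDRep ℂ G} {triv : ι} {η : FDRep ℂ G}
  {k : ℕ}

theorem exists_fixedSubmodule_fixingSubgroup_range_ne_bot [Finite G] (h : IsIrrepSystem rep)
    (htriv : ∀ g, (rep triv).character g = 1)
    (hη : ∀ g, η.character g = (fixedBy Ω g).ncard) {i : ι}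
    (hi : (tensorChain rep η ^ k) triv i ≠ 0) :
    ∃ x : Fin k → Ω, fixedSubmodule (rep i).ρ (fixingSubgroup G (Set.range x)) ≠ ⊥ := by
  have := Fintype.ofFinite G
  have hchar : (rep triv).character * η.character ^ k =
      fun g => ((fixedBy (Fin k → Ω) g).ncard : ℂ) := by
    funext g
    simp [htriv, hη, ncard_fixedBy_pi]
  have hpairing := Complex.ofReal_ne_zero.2 hi
  rw [h.tensorChain_pow_apply, hchar] at hpairing
  simpa only [stabilizer_pi] using
    exists_fixedSubmodule_stabilizer_ne_bot (right_ne_zero_of_mul hpairing)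

theorem one_sub_sum_inv_card_fixingSubgroup_le_tvDist [Fintype G] [Nonempty Ω]
    (h : IsIrrepSystem rep) (htriv : ∀ g, (rep triv).character g = 1)
    (hη : ∀ g, η.character g = (fixedBy Ω g).ncard) {κ : Type*} [Fintype κ] {s : κ → Set Ω}
    (hsmul : ∀ w (g : G), ∃ w', g • s w = s w') (hrange : ∀ x : Fin k → Ω, ∃ w, Set.range x ⊆ s w) :
    1 - ∑ w, (Nat.card (fixingSubgroup G (s w)) : ℝ)⁻¹ ≤
      tvDist ((tensorChain rep η ^ k) triv) (plancherel rep) := by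
  have hdim : Module.finrank ℂ η = Nat.card Ω := by
    have := (FDRep.char_one η).symm.trans (hη 1)
    rw [fixedBy_one_eq_univ, Set.ncard_univ] at this
    exact_mod_cast this
  have : Nontrivial η := Module.nontrivial_of_finrank_pos (R := ℂ) (hdim ▸ Nat.card_pos)
  refine h.one_sub_sum_inv_card_le_tvDist (fun w g => ?_)
    (Matrix.sum_row_of_mem_rowStochastic (pow_mem (h.tensorChain_mem_rowStochastic η) k) triv)
    fun i hi => ?_
  · obtain ⟨w', hw'⟩ := hsmul w g
    exact ⟨w', by rw [← hw', SubMulAction.fixingSubgroup_smul_eq_fixingSubgroup_map_conj]⟩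
  · obtain ⟨x, hx⟩ := h.exists_fixedSubmodule_fixingSubgroup_range_ne_bot htriv hη hi
    obtain ⟨w, hw⟩ := hrange x
    exact ⟨w, ne_bot_of_le_ne_bot hx
      (fixedSubmodule_antitone (rep i).ρ (fixingSubgroup_antitone G Ω hw))⟩

end IsIrrepSystem

end PermutationCharacters

theorem card_le_card_mul_card_stabilizer {G X : Type*} [Group G] [Finite X] [MulAction G X]
    (x : X) : Nat.card G ≤ Nat.card X * Nat.card (MulAction.stabilizer G x) := by
  rw [← (MulAction.stabilizer G x).index_mul_card, MulAction.index_stabilizer,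
    ← Nat.card_coe_set_eq]
  exact Nat.mul_le_mul_right _ (Finite.card_subtype_le _)

section Subspaces

open Module

variable {F V : Type*} [Field F] [AddCommGroup V] [Module F V]

open Pointwise in
theorem finrank_smul_submodule {G : Type*} [Group G] [DistribMulAction G V]
    [SMulCommClass G F V] (g : G) (W : Submodule F V) :
    finrank F (g • W : Submodule F V) = finrank F W :=
  (DistribMulAction.toLinearEquiv F V g).finrank_map_eq W

variable (F V) in
/-- The set of `k`-dimensional subspaces of `V`, as a type. -/
abbrev SubspaceOfFinrank (k : ℕ) : Type _ :=
  {W : Submodule F V // finrank F W = k}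

variable [FiniteDimensional F V]

theorem exists_le_finrank_eq (U : Submodule F V) {k : ℕ} (hU : finrank F U ≤ k)
    (hk : k ≤ finrank F V) : ∃ W : Submodule F V, U ≤ W ∧ finrank F W = k := by
  induction k, hU using Nat.le_induction with
  | base => exact ⟨U, le_rfl, rfl⟩
  | succ k _ ih =>
    obtain ⟨W, hUW, hW⟩ := ih (by lia)
    obtain ⟨v, hv⟩ : ∃ v, v ∉ W := by
      by_contra! h
      rw [Submodule.eq_top_iff'.2 h, finrank_top] at hW
      lia
    exact ⟨W ⊔ Submodule.span F {v}, le_sup_of_le_left hUW,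
      by rw [Submodule.finrank_sup_span_singleton hv, hW]⟩

theorem card_linearIndependent_eq_card_GL [Finite F] {k : ℕ} (hk : finrank F V = k) :
    Nat.card {s : Fin k → V // LinearIndependent F s} = Nat.card (GL (Fin k) F) := by
  have := Fintype.ofFinite F
  have := Module.finite_of_finite F (M := V)
  rw [card_linearIndependent hk.ge, hk, Matrix.card_GL_field]

theorem span_range_coe_of_linearIndependent {k : ℕ} {W : Submodule F V} (hW : finrank F W = k)
    {s : Fin k → W} (hs : LinearIndependent F s) :
    Submodule.span F (Set.range fun i => (s i : V)) = W := by
  have htop := hs.span_eq_top_of_card_eq_finrank' (by simp [hW])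
  calc Submodule.span F (Set.range fun i => (s i : V))
    _ = (Submodule.span F (Set.range s)).map W.subtype := by
      rw [Submodule.map_span, ← Set.range_comp]
      rfl
    _ = W := by rw [htop, Submodule.map_subtype_top]

theorem card_subspaceOfFinrank_mul_card_GL_le [Finite F] (k : ℕ) :
    Nat.card (SubspaceOfFinrank F V k) * Nat.card (GL (Fin k) F) ≤ Nat.card V ^ k := by
  have := Module.finite_of_finite F (M := V)
  have := Fintype.ofFinite (SubspaceOfFinrank F V k)
  let e (p : Σ W : SubspaceOfFinrank F V k, {s : Fin k → W.1 // LinearIndependent F s})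
    (i : Fin k) : V := p.2.1 i
  have he : Function.Injective e := by
    rintro ⟨⟨W, hW⟩, s, hs⟩ ⟨⟨W', hW'⟩, s', hs'⟩ h
    obtain rfl : W = W' := by
      rw [← span_range_coe_of_linearIndependent hW hs,
        ← span_range_coe_of_linearIndependent hW' hs']
      exact congrArg (fun x => Submodule.span F (Set.range x)) h
    obtain rfl : s = s' := funext fun i => Subtype.ext (congrFun h i)
    rfl
  have := Nat.card_le_card_of_injective e he
  rwa [Nat.card_sigma, sum_congr rfl fun W _ => card_linearIndependent_eq_card_GL W.2, sum_const,
    card_univ, smul_eq_mul, Nat.card_fun, Nat.card_fin, ← Nat.card_eq_fintype_card] at this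

theorem card_le_mul_card_fixingSubgroup [Finite F] {G : Type*} [Group G] [DistribMulAction G V]
    [SMulCommClass G F V] (W : Submodule F V) :
    Nat.card G ≤ Nat.card V ^ finrank F W * Nat.card (fixingSubgroup G (W : Set V)) := by
  have := Module.finite_of_finite F (M := V)
  have := Module.finite_of_finite F (M := W →ₗ[F] V)
  have : SMulCommClass F G V := .symm _ _ _
  have hstab : fixingSubgroup G (W : Set V) = MulAction.stabilizer G W.subtype := by
    ext g
    simp [mem_fixingSubgroup_iff, LinearMap.ext_iff]
  have hcard : Nat.card (W →ₗ[F] V) = Nat.card V ^ finrank F W := by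
    rw [natCard_eq_pow_finrank (K := F), finrank_linearMap,
      natCard_eq_pow_finrank (K := F) (V := V), ← pow_mul, mul_comm]
  rw [hstab, ← hcard]
  exact card_le_card_mul_card_stabilizer _

end Subspaces

section GeneralLinearGroup

-- `1 - x - x ^ 2` begins Euler's pentagonal series; the extra `x ^ (m + 2)` feeds the induction.
theorem one_sub_sub_sq_add_pow_le_prod_one_sub_pow {x : ℝ} (hx0 : 0 ≤ x) (hx1 : x ≤ 1) (m : ℕ) :
    1 - x - x ^ 2 + x ^ (m + 2) ≤ ∏ j ∈ range (m + 1), (1 - x ^ (j + 1)) := by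
  induction m with
  | zero => simp
  | succ m ih =>
    have hpow : x ^ (m + 2) ≤ x ^ 2 := pow_le_pow_of_le_one hx0 hx1 (by lia)
    have hnonneg : 0 ≤ x ^ (m + 2) := by positivity
    rw [prod_range_succ]
    calc 1 - x - x ^ 2 + x ^ (m + 3)
      _ ≤ (1 - x - x ^ 2 + x ^ (m + 2)) * (1 - x ^ (m + 2)) := by
        rw [pow_succ x (m + 2)]
        nlinarith
      _ ≤ _ := mul_le_mul_of_nonneg_right ih (sub_nonneg.2 (pow_le_one₀ hx0 hx1))

theorem quarter_le_prod_one_sub_pow {x : ℝ} (hx0 : 0 ≤ x) (hx : x ≤ 1 / 2) (m : ℕ) :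
    1 / 4 ≤ ∏ j ∈ range m, (1 - x ^ (j + 1)) := by
  cases m with
  | zero => norm_num
  | succ m =>
    have hnonneg : 0 ≤ x ^ (m + 2) := by positivity
    refine le_trans ?_ (one_sub_sub_sq_add_pow_le_prod_one_sub_pow hx0 (by linarith) m)
    nlinarith

theorem card_GL_eq_pow_mul_prod (F : Type*) [Field F] [Finite F] (m : ℕ) :
    (Nat.card (GL (Fin m) F) : ℝ) =
      (Nat.card F : ℝ) ^ m ^ 2 * ∏ j ∈ range m, (1 - (Nat.card F : ℝ)⁻¹ ^ (j + 1)) := by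
  have := Fintype.ofFinite F
  have hq : (Nat.card F : ℝ) ≠ 0 := NeZero.ne _
  have hfactor (i : Fin m) : ((Nat.card F ^ m - Nat.card F ^ (Fin.revPerm i : ℕ) : ℕ) : ℝ) =
      (Nat.card F : ℝ) ^ m * (1 - (Nat.card F : ℝ)⁻¹ ^ (i + 1 : ℕ)) := by
    rw [Nat.cast_sub (Nat.pow_le_pow_right Nat.card_pos (Fin.revPerm i).is_lt.le)]
    push_cast
    rw [Fin.revPerm_apply, Fin.val_rev, pow_sub₀ _ hq i.is_lt, inv_pow, mul_one_sub]
  rw [Matrix.card_GL_field, ← Nat.card_eq_fintype_card, ← Equiv.prod_comp Fin.revPerm,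
    Nat.cast_prod, prod_congr rfl fun i _ => hfactor i, prod_mul_distrib, Fin.prod_const, ← pow_mul,
    ← sq, prod_range]

theorem pow_sq_le_four_mul_card_GL (F : Type*) [Field F] [Finite F] (m : ℕ) :
    (Nat.card F : ℝ) ^ m ^ 2 ≤ 4 * Nat.card (GL (Fin m) F) := by
  have hq : (2 : ℝ) ≤ Nat.card F := by exact_mod_cast Finite.one_lt_card (α := F)
  have hprod := quarter_le_prod_one_sub_pow (x := (Nat.card F : ℝ)⁻¹) (by positivity)
    (by rw [one_div]; gcongr) m
  rw [card_GL_eq_pow_mul_prod]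
  nlinarith [show 0 ≤ (Nat.card F : ℝ) ^ m ^ 2 by positivity]

theorem pow_div_card_GL_mul_card_GL_le (F : Type*) [Field F] [Finite F] (k c : ℕ) :
    ((Nat.card F : ℝ) ^ (k + c)) ^ (2 * k) /
        (Nat.card (GL (Fin k) F) * Nat.card (GL (Fin (k + c)) F)) ≤
      16 / (Nat.card F : ℝ) ^ c ^ 2 := by
  have hF : (0 : ℝ) < Nat.card F := Nat.cast_pos.2 Nat.card_pos
  have hGL (m : ℕ) : (0 : ℝ) < Nat.card (GL (Fin m) F) := Nat.cast_pos.2 Nat.card_pos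
  rw [div_le_div_iff₀ (mul_pos (hGL k) (hGL (k + c))) (by positivity)]
  calc ((Nat.card F : ℝ) ^ (k + c)) ^ (2 * k) * (Nat.card F : ℝ) ^ c ^ 2
    _ = (Nat.card F : ℝ) ^ k ^ 2 * (Nat.card F : ℝ) ^ (k + c) ^ 2 := by
      simp only [← pow_mul, ← pow_add]
      ring_nf
    _ ≤ (4 * Nat.card (GL (Fin k) F)) * (4 * Nat.card (GL (Fin (k + c)) F)) := by
      gcongr <;> exact pow_sq_le_four_mul_card_GL F _
    _ = _ := by ring

end GeneralLinearGroup

section LinearActions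

open Module MulAction Pointwise

theorem sum_inv_card_fixingSubgroup_le {F V G : Type*} [Field F] [Finite F] [AddCommGroup V]
    [Module F V] [FiniteDimensional F V] [Group G] [Finite G] [DistribMulAction G V]
    [SMulCommClass G F V] (k : ℕ) [Fintype (SubspaceOfFinrank F V k)] :
    ∑ W : SubspaceOfFinrank F V k, (Nat.card (fixingSubgroup G (W.1 : Set V)) : ℝ)⁻¹ ≤
      (Nat.card V : ℝ) ^ (2 * k) / (Nat.card (GL (Fin k) F) * Nat.card G) := by
  have hG : (0 : ℝ) < Nat.card G := Nat.cast_pos.2 Nat.card_pos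
  have hGL : (0 : ℝ) < Nat.card (GL (Fin k) F) := Nat.cast_pos.2 Nat.card_pos
  have hterm (W : SubspaceOfFinrank F V k) :
      (Nat.card (fixingSubgroup G (W.1 : Set V)) : ℝ)⁻¹ ≤ (Nat.card V : ℝ) ^ k / Nat.card G := by
    rw [inv_eq_one_div, div_le_div_iff₀ (Nat.cast_pos.2 Nat.card_pos) hG, one_mul]
    have := card_le_mul_card_fixingSubgroup (G := G) W.1
    rw [W.2] at this
    exact_mod_cast this
  calc _ ≤ ∑ _ : SubspaceOfFinrank F V k, (Nat.card V : ℝ) ^ k / Nat.card G :=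
        sum_le_sum fun W _ => hterm W
    _ = (Nat.card (SubspaceOfFinrank F V k) * Nat.card (GL (Fin k) F)) *
        Nat.card V ^ k / (Nat.card (GL (Fin k) F) * Nat.card G) := by
      rw [sum_const, nsmul_eq_mul, card_univ, ← Nat.card_eq_fintype_card]
      field_simp
    _ ≤ (Nat.card V ^ k) * Nat.card V ^ k / (Nat.card (GL (Fin k) F) * Nat.card G) := by
      gcongr
      exact_mod_cast card_subspaceOfFinrank_mul_card_GL_le k
    _ = _ := by rw [← pow_add, two_mul]

variable {ι : Type} [Fintype ι] [DecidableEq ι] {k : ℕ}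

theorem IsIrrepSystem.one_sub_pow_div_card_GL_mul_card_le_tvDist {F V G : Type} [Field F]
    [Finite F] [AddCommGroup V] [Module F V] [FiniteDimensional F V] [Group G] [Fintype G]
    [DistribMulAction G V] [SMulCommClass G F V] {rep : ι → FDRep ℂ G} {triv : ι} {η : FDRep ℂ G}
    (h : IsIrrepSystem rep) (htriv : ∀ g, (rep triv).character g = 1)
    (hη : ∀ g, η.character g = (fixedBy V g).ncard) (hk : k ≤ finrank F V) :
    1 - (Nat.card V : ℝ) ^ (2 * k) / (Nat.card (GL (Fin k) F) * Nat.card G) ≤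
      tvDist ((tensorChain rep η ^ k) triv) (plancherel rep) := by
  have := Module.finite_of_finite F (M := V)
  have := Fintype.ofFinite (SubspaceOfFinrank F V k)
  refine (sub_le_sub_left (sum_inv_card_fixingSubgroup_le k) 1).trans
    (h.one_sub_sum_inv_card_fixingSubgroup_le_tvDist htriv hη (fun W g => ?_) fun x => ?_)
  · exact ⟨⟨g • W.1, (finrank_smul_submodule g W.1).trans W.2⟩,
      (Submodule.coe_pointwise_smul g W.1).symm⟩
  · obtain ⟨W, hxW, hW⟩ := exists_le_finrank_eq (Submodule.span F (Set.range x))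
      ((finrank_range_le_card x).trans (Fintype.card_fin k).le) hk
    exact ⟨⟨W, hW⟩, Submodule.span_le.1 hxW⟩

theorem ncard_fixedBy_GL {F : Type} [Field F] [Fintype F] {n : ℕ}
    (g : (Matrix (Fin n) (Fin n) F)ˣ) :
    (fixedBy (Fin n → F) g).ncard = Fintype.card F ^ fixdim g := by
  have : fixedBy (Fin n → F) g =
      LinearMap.ker (Matrix.toLin' ((g : Matrix (Fin n) (Fin n) F) - 1)) := by
    ext v
    simp [Units.smul_def, sub_eq_zero]
  rw [this, fixdim, ← Nat.card_eq_fintype_card, ← natCard_eq_pow_finrank]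
  rfl

end LinearActions

theorem gl_weil_lower_bound_general {F : Type} [Field F] [Fintype F] [DecidableEq F] {q n : ℕ}
    (hq : Fintype.card F = q) {ι : Type} [Fintype ι] [DecidableEq ι]
    {rep : ι → FDRep ℂ (Matrix (Fin n) (Fin n) F)ˣ} (h : IsIrrepSystem rep)
    {triv : ι} (htriv : ∀ g, (rep triv).character g = 1)
    {η : FDRep ℂ (Matrix (Fin n) (Fin n) F)ˣ} (hη : ∀ g, η.character g = (q : ℂ) ^ fixdim g)
    {c : ℕ} (hc : c ≤ n) :
    1 - 16 / (q : ℝ) ^ c ^ 2 ≤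
      tvDist ((tensorChain rep η ^ (n - c)) triv) (plancherel rep) := by
  subst hq
  obtain ⟨k, rfl⟩ := Nat.exists_eq_add_of_le' hc
  rw [Nat.add_sub_cancel]
  refine (sub_le_sub_left ?_ 1).trans
    (h.one_sub_pow_div_card_GL_mul_card_le_tvDist (F := F) (V := Fin (k + c) → F) htriv
      (fun g => by rw [hη, ncard_fixedBy_GL, Nat.cast_pow]) (by simp))
  simpa using pow_div_card_GL_mul_card_GL_le F k c

/-- **Theorem (lower bound for `GL_n(q)`).**  Let `F` be a finite field with `q` elements,
`n ≥ 3`, and `η` a complex representation of `G = GL_n(F)` whose character satisfies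
`χ^η(g) = q^{dim ker(g−1)}` (the Weil representation).  Let `K` be the tensor product
Markov chain on `Irr(G)` associated with `η`, started at the trivial representation, and
`π` the Plancherel measure.  Then for every `c` with `1 ≤ c ≤ n−1` and `r = n−c`,
`‖K^r_𝟙 − π‖_TV ≥ 1 − 11.25·q^{2−2c} − 18·q^{1−c}`. -/
theorem gl_weil_lower_bound {F : Type} [Field F] [Fintype F] [DecidableEq F]
    {q n : ℕ} (hq : Fintype.card F = q) (hn : 3 ≤ n)
    {ι : Type} [Fintype ι] [DecidableEq ι]
    (rep : ι → FDRep ℂ (Matrix (Fin n) (Fin n) F)ˣ)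
    (hsimple : ∀ i, Simple (rep i))
    (hcomplete : ∀ V : FDRep ℂ (Matrix (Fin n) (Fin n) F)ˣ, Simple V →
      ∃ i, Nonempty (V ≅ rep i))
    (hinj : ∀ i j : ι, Nonempty (rep i ≅ rep j) → i = j)
    (triv : ι) (htriv : ∀ g : (Matrix (Fin n) (Fin n) F)ˣ, (rep triv).character g = 1)
    (η : FDRep ℂ (Matrix (Fin n) (Fin n) F)ˣ)
    (hη : ∀ g : (Matrix (Fin n) (Fin n) F)ˣ, η.character g = (q : ℂ) ^ fixdim g)
    (c : ℕ) (hc1 : 1 ≤ c) (hc2 : c ≤ n - 1) :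
    1 - 11.25 * (q : ℝ) ^ (2 - 2 * (c : ℤ)) - 18 * (q : ℝ) ^ (1 - (c : ℤ)) ≤
      tvDist (fun ρ => (tensorChain rep η ^ (n - c)) triv ρ) (plancherel rep) := by
  have hq1 : (1 : ℝ) ≤ q := by exact_mod_cast hq ▸ Fintype.card_pos
  have hbound : 16 / (q : ℝ) ^ c ^ 2 ≤ 18 * (q : ℝ) ^ (1 - (c : ℤ)) := by
    rw [div_eq_mul_inv, ← zpow_natCast, ← zpow_neg]
    have hexp : -((c ^ 2 : ℕ) : ℤ) ≤ 1 - c := by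
      push_cast
      nlinarith
    gcongr
    · norm_num
  have hnonneg : 0 ≤ 11.25 * (q : ℝ) ^ (2 - 2 * (c : ℤ)) := by positivity
  have := gl_weil_lower_bound_general hq ⟨hsimple, hcomplete, hinj⟩ htriv hη (show c ≤ n by lia)
  linarith
end
end
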